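/- Let S be a polynomial ring over a field, and I ⊆ S an ideal generated by c elements such that codim V(I) = c (so the generators form a regular sequence and S/I is a complete intersection). Suppose x₁, x₂ ∈ S satisfy codim V(I, x₁) ≥ c+1 and codim V(I, x₂) ≥ c+1, and (S/I)_{x₁x₂} is a domain. Then x₁x₂ is a non-zero divisor on S/I, S/I is a domain, and I : ⟨x₁x₂⟩^∞ = I. -/

import Mathlib

/-- The codimension of the vanishing locus `V(I)` in `Spec S`: the infimum of the
heights of the primes containing `I`. -/
noncomputable def codimV {S : Type*} [CommRing S] (I : Ideal S) : ℕ∞ :=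
  ⨅ p ∈ {p : PrimeSpectrum S | I ≤ p.asIdeal}, Order.height p

/-
A regular local ring is Cohen–Macaulay, since dividing by some `x ∈ 𝔪 \ 𝔪²` keeps it regular and
lowers its dimension. In a Cohen–Macaulay ring unmixedness holds: if `c` elements generate an ideal
`I` of height at least `c`, then every associated prime of `S/I` has height at most `c`. No such
prime contains an `x` with `ht (I + (x)) ≥ c + 1`, so `x₁` and `x₂`, hence also `x₁x₂`, are
non-zero-divisors on `S/I`. Therefore `S/I` embeds into its localization at `x₁x₂`, a domain.
-/

open IsLocalRing RingTheory.Sequence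
open scoped Pointwise

universe u v

section RegularSequences

variable {R : Type u} [CommRing R] {M : Type v} [AddCommGroup M] [Module R M]

lemma mem_maximalIdeal_of_isRegular [IsLocalRing R] {rs : List R} (hrs : IsRegular M rs) {r : R}
    (hr : r ∈ rs) : r ∈ maximalIdeal R := by
  have hne : Ideal.ofList rs ≠ ⊤ := fun h => hrs.top_ne_smul (by rw [h, Submodule.top_smul])
  exact le_maximalIdeal hne (Ideal.subset_span hr)

/- By Rees' theorem the lengths of regular sequences are detected by the vanishing of
`Ext(R/𝔪, -)`, which drops by exactly one degree along `0 → M → M → M/aM → 0`. -/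
open CategoryTheory Abelian in
lemma exists_isRegular_quotSMulTop [IsLocalRing R] [IsNoetherianRing R] [Small.{v} R]
    [Module.Finite R M] {rs : List R} (hrs : IsRegular M rs) {n : ℕ} (hn : rs.length = n + 1)
    {a : R} (ha : a ∈ maximalIdeal R) (hreg : IsSMulRegular M a) :
    ∃ rs' : List R, IsRegular (QuotSMulTop a M) rs' ∧ rs'.length = n := by
  have := hrs.nontrivial
  have := nontrivial_quotSMulTop_of_mem_maximalIdeal M ha
  have smul_lt (N : Type v) [AddCommGroup N] [Module R N] [Module.Finite R N] [Nontrivial N] :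
      maximalIdeal R • (⊤ : Submodule R N) < ⊤ :=
    lt_top_iff_ne_top.2
      (Submodule.top_ne_ideal_smul_of_le_jacobson_annihilator (maximalIdeal_le_jacobson _)).symm
  let k := ModuleCat.of R (Shrink.{v} (R ⧸ maximalIdeal R))
  have ext_eq_zero : ∀ i < n + 1, Subsingleton (Ext k (ModuleCat.of R M) i) := by
    refine ((ModuleCat.exists_isRegular_tfae _ (n + 1) (ModuleCat.of R M) (smul_lt M)).out 3 1).1 ?_
    exact ⟨rs, hn, fun _ => mem_maximalIdeal_of_isRegular hrs, hrs⟩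
  obtain ⟨rs', hlen, -, hrs'⟩ :=
    ((ModuleCat.exists_isRegular_tfae _ n (ModuleCat.of R (QuotSMulTop a M))
      (smul_lt _)).out 1 3).1 fun i hi => by
        have left_zero := AddCommGrpCat.isZero_of_iff_subsingleton.2 (ext_eq_zero i (by lia))
        have right_zero :=
          AddCommGrpCat.isZero_of_iff_subsingleton.2 (ext_eq_zero (i + 1) (by lia))
        exact AddCommGrpCat.subsingleton_of_isZero <| ShortComplex.Exact.isZero_of_both_zeros
          (Ext.covariant_sequence_exact₃' k
            (IsSMulRegular.smulShortComplex_shortExact (M := ModuleCat.of R M) hreg) i (i + 1) rfl)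
          (left_zero.eq_zero_of_src _) (right_zero.eq_zero_of_tgt _)
  exact ⟨rs', hrs', hlen⟩

lemma notMem_of_isAssociatedPrime_of_isSMulRegular {y : R} (hreg : IsSMulRegular M y)
    {p : Ideal R} (hp : IsAssociatedPrime p M) : y ∉ p := by
  obtain ⟨hprime, x, rfl⟩ := hp
  rintro ⟨n, hn⟩
  have hx : x = 0 :=
    (hreg.pow n).right_eq_zero_of_smul (by simpa [Submodule.mem_colon_singleton] using hn)
  exact hprime.ne_top (by simp [hx])

variable [IsNoetherianRing R] [Module.Finite R M]

lemma exists_isAssociatedPrime_quotSMulTop {y : R} (hy : y ∈ (⊥ : Ideal R).jacobson)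
    (hreg : IsSMulRegular M y) {p : Ideal R} (hp : IsAssociatedPrime p M) :
    ∃ q : Ideal R, IsAssociatedPrime q (QuotSMulTop y M) ∧ p ≤ q ∧ y ∈ q := by
  let N := Submodule.torsionBySet R M p
  have mem_N {z : M} : z ∈ N ↔ ∀ r ∈ p, r • z = 0 := by
    simp [N, Submodule.mem_torsionBySet_iff]
  have N_ne_bot : N ≠ ⊥ := by
    obtain ⟨hprime, x, rfl⟩ := isAssociatedPrime_iff.1 hp
    refine (Submodule.ne_bot_iff _).2 ⟨x, mem_N.2 fun r hr => ?_, ?_⟩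
    · simpa [Submodule.mem_colon_singleton] using hr
    · rintro rfl
      exact hprime.ne_top (by simp)
  obtain ⟨z, hzN, hz⟩ : ∃ z ∈ N, z ∉ y • (⊤ : Submodule R M) := by
    by_contra! hN
    refine N_ne_bot <| Submodule.eq_bot_of_le_smul_of_le_jacobson_bot (Ideal.span {y}) N
      (IsNoetherian.noetherian N) (fun z hz => ?_) (by simpa [Ideal.span_le] using hy)
    obtain ⟨w, -, rfl⟩ := hN z hz
    refine Submodule.smul_mem_smul (Ideal.mem_span_singleton_self y) (mem_N.2 fun r hr => ?_)
    exact hreg.right_eq_zero_of_smul (by rw [smul_comm]; exact mem_N.1 hz r hr)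
  have hz_ne : (Submodule.Quotient.mk z : QuotSMulTop y M) ≠ 0 := by
    rwa [Ne, Submodule.Quotient.mk_eq_zero]
  obtain ⟨q, hq, hle⟩ := exists_le_isAssociatedPrime_of_isNoetherianRing R _ hz_ne
  have mem_q {r : R} (hr : r • z ∈ y • (⊤ : Submodule R M)) : r ∈ q :=
    hle <| by rwa [Submodule.mem_colon_singleton, Submodule.mem_bot, ← Submodule.Quotient.mk_smul,
      Submodule.Quotient.mk_eq_zero]
  exact ⟨q, hq, fun r hr => mem_q (by simp [mem_N.1 hzN r hr]),
    mem_q (Submodule.smul_mem_pointwise_smul _ _ _ trivial)⟩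

lemma length_le_ringKrullDim_quotient_of_isRegular [IsLocalRing R] {rs : List R}
    (hrs : IsRegular M rs) {p : Ideal R} (hp : IsAssociatedPrime p M) :
    (rs.length : WithBot ℕ∞) ≤ ringKrullDim (R ⧸ p) := by
  induction rs generalizing M p with
  | nil =>
    have := hp.isPrime
    simpa using ringKrullDim_nonneg_of_nontrivial (R := R ⧸ p)
  | cons y ys ih =>
    have hy := mem_maximalIdeal_of_isRegular hrs List.mem_cons_self
    obtain ⟨hreg, hys⟩ := (isRegular_cons_iff M y ys).1 hrs
    obtain ⟨q, hq, hpq, hyq⟩ := exists_isAssociatedPrime_quotSMulTop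
      (maximalIdeal_le_jacobson _ hy) hreg hp
    have hyp := notMem_of_isAssociatedPrime_of_isSMulRegular hreg hp
    have := hp.isPrime
    calc ((y :: ys).length : WithBot ℕ∞) = ys.length + 1 := by simp
      _ ≤ ringKrullDim (R ⧸ q) + 1 := by gcongr; exact ih hys hq
      _ ≤ ringKrullDim (R ⧸ p) :=
        ringKrullDim_succ_le_of_surjective (Ideal.Quotient.factor hpq)
          (Ideal.Quotient.factor_surjective hpq) (r := Ideal.Quotient.mk p y)
          (mem_nonZeroDivisors_of_ne_zero (by rwa [Ne, Ideal.Quotient.eq_zero_iff_mem]))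
          (by simpa [Ideal.Quotient.eq_zero_iff_mem] using hyq)

end RegularSequences

/-- The Cohen–Macaulay property `depth M = dim M` of a finite module `M` over a Noetherian local
ring `R`: some `M`-regular sequence has length `dim M`. Such a sequence lies in the maximal ideal
of `R`, and its existence forces `M ≠ 0`. -/
def IsCohenMacaulay (R : Type u) [CommRing R] (M : Type v) [AddCommGroup M] [Module R M] : Prop :=
  ∃ rs : List R, IsRegular M rs ∧ (rs.length : WithBot ℕ∞) = Module.supportDim R M

section CohenMacaulay

variable {R : Type u} [CommRing R] {M : Type v} [AddCommGroup M] [Module R M]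

lemma IsCohenMacaulay.of_equiv {N : Type*} [AddCommGroup N] [Module R N] (e : M ≃ₗ[R] N)
    (hM : IsCohenMacaulay R M) : IsCohenMacaulay R N := by
  obtain ⟨rs, hrs, hlen⟩ := hM
  exact ⟨rs, (e.isRegular_congr rs).1 hrs, hlen.trans (Module.supportDim_eq_of_equiv e)⟩

lemma IsCohenMacaulay.of_quotient_self [IsLocalRing R] {I : Ideal R} [IsLocalRing (R ⧸ I)]
    (h : IsCohenMacaulay (R ⧸ I) (R ⧸ I)) : IsCohenMacaulay R (R ⧸ I) := by
  obtain ⟨rs, hrs, hlen⟩ := h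
  obtain ⟨rs, rfl⟩ := List.map_surjective_iff.2 (Ideal.Quotient.mk_surjective (I := I)) rs
  have hweak : IsWeaklyRegular (R ⧸ I) rs :=
    (isWeaklyRegular_map_algebraMap_iff (R ⧸ I) (R ⧸ I) rs).1 hrs.toIsWeaklyRegular
  have mem_maximal : ∀ r ∈ rs, r ∈ maximalIdeal R := fun r hr hunit =>
    mem_maximalIdeal_of_isRegular hrs (List.mem_map_of_mem hr) (hunit.map _)
  refine ⟨rs, .of_isWeaklyRegular_of_mem_maximalIdeal _ mem_maximal hweak, ?_⟩
  rw [Module.supportDim_quotient_eq_ringKrullDim, ← Module.supportDim_self_eq_ringKrullDim, ← hlen]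
  simp

variable [IsLocalRing R] [IsNoetherianRing R] [Module.Finite R M]

lemma supportDim_le_supportDim_quotient_ofList_add_length {as : List R}
    (has : ∀ a ∈ as, a ∈ maximalIdeal R) :
    Module.supportDim R M ≤
      Module.supportDim R (M ⧸ (Ideal.ofList as • ⊤ : Submodule R M)) + as.length := by
  induction as generalizing M with
  | nil =>
    let e := Submodule.quotEquivOfEqBot (Ideal.ofList ([] : List R) • ⊤ : Submodule R M) (by simp)
    simpa using (Module.supportDim_eq_of_equiv e).ge
  | cons a as ih =>
    rw [List.forall_mem_cons] at has
    rw [Module.supportDim_eq_of_equiv (Submodule.quotOfListConsSMulTopEquivQuotSMulTopInner M a as)]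
    calc Module.supportDim R M
      _ ≤ Module.supportDim R (QuotSMulTop a M) + 1 :=
        Module.supportDim_le_supportDim_quotSMulTop_succ has.1
      _ ≤ Module.supportDim R (QuotSMulTop a M ⧸
            (Ideal.ofList as • ⊤ : Submodule R (QuotSMulTop a M))) + as.length + 1 := by
        gcongr
        exact ih has.2
      _ = _ := by simp [add_assoc]

namespace IsCohenMacaulay

lemma supportDim_le_ringKrullDim_quotient (hM : IsCohenMacaulay R M) {p : Ideal R}
    (hp : IsAssociatedPrime p M) : Module.supportDim R M ≤ ringKrullDim (R ⧸ p) := by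
  obtain ⟨rs, hrs, hlen⟩ := hM
  exact hlen ▸ length_le_ringKrullDim_quotient_of_isRegular hrs hp

lemma isSMulRegular_of_supportDim_quotSMulTop_add_one_le (hM : IsCohenMacaulay R M) {a : R}
    (hdim : Module.supportDim R (QuotSMulTop a M) + 1 ≤ Module.supportDim R M) :
    IsSMulRegular M a := by
  by_contra ha
  obtain ⟨p, hp, hap⟩ : ∃ p ∈ associatedPrimes R M, a ∈ p := by
    simpa using (biUnion_associatedPrimes_eq_compl_regular R M).ge ha
  have := hp.isPrime
  have p_mem_support : (⟨p, this⟩ : PrimeSpectrum R) ∈ Module.support R (QuotSMulTop a M) := by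
    rw [Module.support_quotSMulTop, Module.support_eq_zeroLocus]
    exact ⟨by simpa [Submodule.annihilator_top] using hp.annihilator_le, by simpa using hap⟩
  have annihilator_le : Module.annihilator R (QuotSMulTop a M) ≤ p := by
    simpa [Module.support_eq_zeroLocus] using p_mem_support
  have hlt : Module.supportDim R (QuotSMulTop a M) < Module.supportDim R M := by
    obtain ⟨rs, -, hlen⟩ := hM
    rwa [← hlen, ← ENat.WithBot.add_one_le_natCast_iff, hlen]
  refine hlt.not_ge ?_
  calc Module.supportDim R M
    _ ≤ ringKrullDim (R ⧸ p) := hM.supportDim_le_ringKrullDim_quotient hp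
    _ ≤ ringKrullDim (R ⧸ Module.annihilator R (QuotSMulTop a M)) :=
      ringKrullDim_le_of_surjective _ (Ideal.Quotient.factor_surjective annihilator_le)
    _ = Module.supportDim R (QuotSMulTop a M) :=
      (Module.supportDim_eq_ringKrullDim_quotient_annihilator R _).symm

lemma quotSMulTop [Small.{v} R] (hM : IsCohenMacaulay R M) {a : R} (ha : a ∈ maximalIdeal R)
    (hreg : IsSMulRegular M a) : IsCohenMacaulay R (QuotSMulTop a M) := by
  obtain ⟨rs, hrs, hlen⟩ := hM
  rw [← Module.supportDim_quotSMulTop_succ_eq_supportDim hreg ha] at hlen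
  match rs, hrs, hlen with
  | [], hrs, hlen =>
    have := hrs.nontrivial
    have := nontrivial_quotSMulTop_of_mem_maximalIdeal M ha
    exact absurd ((ENat.WithBot.add_one_le_zero_iff _).1 (by simpa using hlen.ge))
      (Module.supportDim_ne_bot_of_nontrivial R _)
  | r :: rs, hrs, hlen =>
    obtain ⟨rs', hrs', hlen'⟩ := exists_isRegular_quotSMulTop hrs rfl ha hreg
    exact ⟨rs', hrs', by rw [hlen']; exact ENat.WithBot.add_one_cancel.1 (by simpa using hlen)⟩

lemma of_quotSMulTop {a : R} (ha : a ∈ maximalIdeal R) (hreg : IsSMulRegular M a)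
    (hM : IsCohenMacaulay R (QuotSMulTop a M)) : IsCohenMacaulay R M := by
  obtain ⟨rs, hrs, hlen⟩ := hM
  refine ⟨a :: rs, .cons hreg hrs, ?_⟩
  rw [← Module.supportDim_quotSMulTop_succ_eq_supportDim hreg ha, ← hlen]
  simp

lemma quotient_ofList [Small.{v} R] (hM : IsCohenMacaulay R M) {as : List R}
    (has : ∀ a ∈ as, a ∈ maximalIdeal R)
    (hdim : Module.supportDim R (M ⧸ (Ideal.ofList as • ⊤ : Submodule R M)) + as.length ≤
      Module.supportDim R M) :
    IsCohenMacaulay R (M ⧸ (Ideal.ofList as • ⊤ : Submodule R M)) := by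
  induction as generalizing M with
  | nil => exact hM.of_equiv (Submodule.quotEquivOfEqBot _ (by simp)).symm
  | cons a as ih =>
    let e := Submodule.quotOfListConsSMulTopEquivQuotSMulTopInner M a as
    rw [List.forall_mem_cons] at has
    rw [Module.supportDim_eq_of_equiv e] at hdim
    rw [List.length_cons, Nat.cast_succ, ← add_assoc] at hdim
    have hreg : IsSMulRegular M a := by
      refine hM.isSMulRegular_of_supportDim_quotSMulTop_add_one_le (le_trans ?_ hdim)
      gcongr
      exact supportDim_le_supportDim_quotient_ofList_add_length has.2
    rw [← Module.supportDim_quotSMulTop_succ_eq_supportDim hreg has.1,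
      ENat.WithBot.add_le_add_one_right_iff] at hdim
    exact (ih (hM.quotSMulTop has.1 hreg) has.2 hdim).of_equiv e.symm

end IsCohenMacaulay

end CohenMacaulay

section RegularLocalRing

lemma exists_span_le_span_insert_erase {R M : Type*} [CommRing R] [IsLocalRing R] [AddCommGroup M]
    [Module R M] [DecidableEq M] {s : Finset M} {x : M} (hx : x ∈ Submodule.span R (s : Set M))
    (hx' : x ∉ maximalIdeal R • Submodule.span R (s : Set M)) :
    ∃ t ∈ s, Submodule.span R (s : Set M) ≤ Submodule.span R (insert x (s.erase t)) := by
  obtain ⟨f, -, rfl⟩ := Submodule.mem_span_finset.1 hx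
  obtain ⟨t, hts, hunit⟩ : ∃ t ∈ s, IsUnit (f t) := by
    by_contra! hf
    exact hx' <| sum_mem fun t ht =>
      Submodule.smul_mem_smul ((mem_maximalIdeal _).2 (hf t ht)) (Submodule.subset_span ht)
  refine ⟨t, hts, Submodule.span_le.2 fun a ha => ?_⟩
  obtain hat | rfl := ne_or_eq a t
  · exact Submodule.subset_span (.inr (Finset.mem_erase.2 ⟨hat, ha⟩))
  refine (Submodule.smul_mem_iff_of_isUnit _ hunit).1 ?_
  rw [eq_sub_of_add_eq (Finset.add_sum_erase s (fun a => f a • a) hts)]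
  exact sub_mem (Submodule.subset_span (Set.mem_insert _ _)) <| sum_mem fun a ha =>
    Submodule.smul_mem _ _ (Submodule.subset_span (Set.mem_insert_of_mem _ ha))

lemma isDomain_of_isPrime_span_singleton {R : Type*} [CommRing R] [IsNoetherianRing R] {x : R}
    (hx : x ∈ (⊥ : Ideal R).jacobson) (hprime : (Ideal.span {x}).IsPrime)
    (hmin : ∀ q ∈ minimalPrimes R, x ∉ q) : IsDomain R := by
  obtain ⟨q, hq, hqx⟩ := Ideal.exists_minimalPrimes_le (bot_le (a := Ideal.span {x}))
  have := hq.1.1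
  have hq_bot : q = ⊥ := by
    refine Submodule.eq_bot_of_le_smul_of_le_jacobson_bot (Ideal.span {x}) q
      (IsNoetherian.noetherian q) (fun z hz => ?_) (by simpa [Ideal.span_le] using hx)
    obtain ⟨w, rfl⟩ := Ideal.mem_span_singleton.1 (hqx hz)
    exact Submodule.smul_mem_smul (Ideal.mem_span_singleton_self x)
      ((this.mem_or_mem hz).resolve_left (hmin q hq))
  subst hq_bot
  exact .of_bot_isPrime R

section

variable {R : Type*} [CommRing R] [IsLocalRing R] [IsNoetherianRing R]

lemma spanFinrank_maximalIdeal_quotient_add_one_le {x : R} [IsLocalRing (R ⧸ Ideal.span {x})]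
    (hx : x ∈ maximalIdeal R) (hx' : x ∉ maximalIdeal R ^ 2) :
    (maximalIdeal (R ⧸ Ideal.span {x})).spanFinrank + 1 ≤ (maximalIdeal R).spanFinrank := by
  classical
  obtain ⟨s, hcard, hs⟩ :=
    (IsNoetherian.noetherian (maximalIdeal R)).exists_span_finset_card_eq_spanFinrank
  obtain ⟨t, hts, hle⟩ := exists_span_le_span_insert_erase (R := R) (hs ▸ hx)
    (by rwa [hs, smul_eq_mul, ← pow_two])
  let π := Ideal.Quotient.mk (Ideal.span {x})
  have hπx : π x = 0 := Ideal.Quotient.eq_zero_iff_mem.2 (Ideal.mem_span_singleton_self x)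
  have span_eq : maximalIdeal (R ⧸ Ideal.span {x}) = Ideal.span (π '' (s.erase t)) := by
    rw [← map_maximalIdeal_of_surjective π Ideal.Quotient.mk_surjective, ← hs]
    refine le_antisymm ?_ ?_
    · refine (Ideal.map_mono hle).trans_eq ?_
      rw [← Ideal.span, Ideal.map_span, Set.image_insert_eq, hπx, Ideal.span_insert_zero]
    · rw [← Ideal.span, Ideal.map_span]
      exact Ideal.span_mono (Set.image_mono (Finset.erase_subset t s))
  calc (maximalIdeal (R ⧸ Ideal.span {x})).spanFinrank + 1
    _ ≤ (π '' (s.erase t)).ncard + 1 := by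
      rw [span_eq]
      gcongr
      exact Submodule.spanFinrank_span_le_ncard_of_finite ((s.erase t).finite_toSet.image π)
    _ ≤ (s.erase t).card + 1 := by
      gcongr
      exact (Set.ncard_image_le (s.erase t).finite_toSet).trans_eq (Set.ncard_coe_finset _)
    _ = (maximalIdeal R).spanFinrank := by rw [Finset.card_erase_add_one hts, hcard]

lemma exists_mem_maximalIdeal_notMem_sq_notMem_minimalPrimes (hdim : ringKrullDim R ≠ 0) :
    ∃ x ∈ maximalIdeal R, x ∉ maximalIdeal R ^ 2 ∧ ∀ q ∈ minimalPrimes R, x ∉ q := by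
  have not_minimal : maximalIdeal R ∉ minimalPrimes R := fun h => hdim <| by
    rw [← maximalIdeal_height_eq_ringKrullDim, Ideal.height_eq_zero_iff.2 h]
    rfl
  by_contra! hcover
  obtain ⟨q, rfl | hq, hle⟩ := (Ideal.subset_union_prime_finite
    ((minimalPrimes.finite_of_isNoetherianRing R).insert (maximalIdeal R ^ 2)) (f := id)
    (maximalIdeal R ^ 2) (maximalIdeal R ^ 2)
    (fun i hi hne _ => (hi.resolve_left hne).1.1)).1 fun x hx => by
      by_cases hx2 : x ∈ maximalIdeal R ^ 2
      · exact Set.mem_biUnion (Set.mem_insert _ _) hx2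
      · obtain ⟨q, hq, hxq⟩ := hcover x hx hx2
        exact Set.mem_biUnion (Set.mem_insert_of_mem _ hq) hxq
  · have eq_bot : maximalIdeal R = ⊥ :=
      Submodule.eq_bot_of_le_smul_of_le_jacobson_bot (maximalIdeal R) (maximalIdeal R)
        (IsNoetherian.noetherian _) (by simpa [pow_two] using hle) (maximalIdeal_le_jacobson _)
    exact not_minimal ⟨⟨inferInstance, bot_le⟩, fun _ _ _ => by simp [eq_bot]⟩
  · exact not_minimal (le_antisymm (le_maximalIdeal hq.1.1.ne_top) hle ▸ hq)

end

lemma isRegularLocalRing_quotient_span_singleton {R : Type*} [CommRing R] [IsRegularLocalRing R]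
    {x : R} (hx : x ∈ maximalIdeal R) (hx' : x ∉ maximalIdeal R ^ 2) :
    IsRegularLocalRing (R ⧸ Ideal.span {x}) := by
  have hle : Ideal.span {x} ≤ maximalIdeal R := by simpa [Ideal.span_le] using hx
  have : Nontrivial (R ⧸ Ideal.span {x}) :=
    Ideal.Quotient.nontrivial_iff.2 (ne_top_of_le_ne_top Ideal.IsPrime.ne_top' hle)
  have : IsLocalRing (R ⧸ Ideal.span {x}) := .of_surjective' _ Ideal.Quotient.mk_surjective
  refine .of_spanFinrank_maximalIdeal_le _ (ENat.WithBot.add_le_add_one_right_iff.1 ?_)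
  calc ((maximalIdeal (R ⧸ Ideal.span {x})).spanFinrank : WithBot ℕ∞) + 1
    _ ≤ (maximalIdeal R).spanFinrank := by
      exact_mod_cast spanFinrank_maximalIdeal_quotient_add_one_le hx hx'
    _ = ringKrullDim R := (isRegularLocalRing_iff R).1 ‹_›
    _ ≤ ringKrullDim (R ⧸ Ideal.span {x}) + 1 := by
      simpa [ringJacobson_eq_maximalIdeal, hx] using
        ringKrullDim_le_ringKrullDim_quotient_add_encard ({x} : Set R)

theorem isRegularLocalRing_induction {P : (R : Type u) → [CommRing R] → Prop}
    (isField : ∀ (R : Type u) [CommRing R], IsField R → P R)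
    (quotient : ∀ (R : Type u) [CommRing R] [IsRegularLocalRing R], ringKrullDim R ≠ 0 →
      (∀ x ∈ maximalIdeal R, x ∉ maximalIdeal R ^ 2 → P (R ⧸ Ideal.span {x})) → P R)
    (R : Type u) [CommRing R] [IsRegularLocalRing R] : P R := by
  generalize hd : (maximalIdeal R).spanFinrank = d
  induction d using Nat.strong_induction_on generalizing R with
  | h d ih =>
  by_cases hdim : ringKrullDim R = 0
  · refine isField R (isField_iff_maximalIdeal_eq.2 ?_)
    rw [← (isRegularLocalRing_iff R).1 ‹_›] at hdim
    exact (Submodule.spanFinrank_eq_zero_iff_eq_bot (IsNoetherian.noetherian _)).1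
      (by exact_mod_cast hdim)
  · refine quotient R hdim fun x hx hx' => ?_
    have := isRegularLocalRing_quotient_span_singleton hx hx'
    exact ih _ (hd ▸ spanFinrank_maximalIdeal_quotient_add_one_le hx hx') _ rfl

theorem isDomain_of_isRegularLocalRing (R : Type u) [CommRing R] [IsRegularLocalRing R] :
    IsDomain R := by
  refine isRegularLocalRing_induction (P := fun R _ => IsDomain R)
    (fun R _ hR => hR.isDomain) (fun R _ _ hdim ih => ?_) R
  obtain ⟨x, hx, hx', hmin⟩ := exists_mem_maximalIdeal_notMem_sq_notMem_minimalPrimes hdim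
  exact isDomain_of_isPrime_span_singleton (maximalIdeal_le_jacobson _ hx)
    ((Ideal.Quotient.isDomain_iff_prime _).1 (ih x hx hx')) hmin

theorem isCohenMacaulay_of_isRegularLocalRing (R : Type u) [CommRing R] [IsRegularLocalRing R] :
    IsCohenMacaulay R R := by
  refine isRegularLocalRing_induction (P := fun R _ => IsCohenMacaulay R R)
    (fun R _ hR => ?_) (fun R _ _ hdim ih => ?_) R
  · have := hR.nontrivial
    refine ⟨[], .nil R R, ?_⟩
    rw [Module.supportDim_self_eq_ringKrullDim, ringKrullDim_eq_zero_of_isField hR]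
    rfl
  · obtain ⟨x, hx, hx', -⟩ := exists_mem_maximalIdeal_notMem_sq_notMem_minimalPrimes hdim
    have := isDomain_of_isRegularLocalRing R
    have := isRegularLocalRing_quotient_span_singleton hx hx'
    have hreg : IsSMulRegular R x :=
      (IsRegular.of_ne_zero (by rintro rfl; exact hx' (zero_mem _))).left.isSMulRegular
    refine .of_quotSMulTop hx hreg ((ih x hx hx').of_quotient_self.of_equiv ?_)
    exact Submodule.quotEquivOfEq _ _ (by simp [← Submodule.ideal_span_singleton_smul])

end RegularLocalRing

section Heights

variable {S : Type*} [CommRing S]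

lemma codimV_eq_height (I : Ideal S) : codimV I = I.height := by
  refine le_antisymm ?_ (le_iInf₂ fun p hp => ?_)
  · rw [Ideal.height_eq_inf_minimalPrimes]
    refine le_iInf₂ fun p hp => ?_
    have := hp.1.1
    exact (iInf₂_le (⟨p, this⟩ : PrimeSpectrum S) hp.1.2).trans_eq
      (PrimeSpectrum.height_eq_orderHeight ⟨p, this⟩).symm
  · rw [← PrimeSpectrum.height_eq_orderHeight]
    exact Ideal.height_mono hp

lemma height_le_height_map_algebraMap (M : Submonoid S) (R : Type*) [CommRing R] [Algebra S R]
    [IsLocalization M R] (I : Ideal S) : I.height ≤ (I.map (algebraMap S R)).height := by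
  rw [Ideal.height_eq_inf_minimalPrimes (I.map _)]
  refine le_iInf₂ fun q hq => ?_
  have := hq.1.1
  rw [← IsLocalization.height_under M q]
  exact Ideal.height_mono (Ideal.map_le_iff_le_comap.1 hq.1.2)

lemma ringKrullDim_quotient_add_height_le (J : Ideal S) :
    ringKrullDim (S ⧸ J) + J.height ≤ ringKrullDim S := by
  obtain rfl | hJ := eq_or_ne J ⊤
  · simp [ringKrullDim_eq_bot_of_subsingleton]
  obtain ⟨p, hp, hJp⟩ := Ideal.exists_le_maximal J hJ
  have : Nonempty (PrimeSpectrum S) := ⟨⟨p, hp.isPrime⟩⟩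
  have : Nonempty (PrimeSpectrum.zeroLocus (J : Set S)) := ⟨⟨⟨p, hp.isPrime⟩, hJp⟩⟩
  rw [ringKrullDim_quotient, Order.krullDim_eq_iSup_length, ringKrullDim,
    Order.krullDim_eq_iSup_height_add_coheight_of_nonempty, ← WithBot.coe_add, ENat.iSup_add,
    WithBot.coe_le_coe]
  refine iSup_le fun l => le_iSup_of_le l.head.1 ?_
  rw [add_comm]
  gcongr
  · rw [← PrimeSpectrum.height_eq_orderHeight]
    exact Ideal.height_mono l.head.2
  · exact Order.length_le_coheight (p := l.map Subtype.val fun _ _ h => h) le_rfl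

end Heights

section

variable {R : Type u} [CommRing R]

lemma le_of_isAssociatedPrime_quotient {I p : Ideal R} (hp : IsAssociatedPrime p (R ⧸ I)) :
    I ≤ p := by
  simpa [Submodule.annihilator_top, Ideal.annihilator_quotient] using hp.annihilator_le

lemma IsCohenMacaulay.ringKrullDim_le_length [IsLocalRing R] [IsNoetherianRing R]
    (hR : IsCohenMacaulay R R) {rs : List R} (hrs : rs.length ≤ (Ideal.ofList rs).height)
    (hm : IsAssociatedPrime (maximalIdeal R) (R ⧸ Ideal.ofList rs)) :
    ringKrullDim R ≤ rs.length := by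
  have smul_top_eq : (Ideal.ofList rs • ⊤ : Submodule R R) = Ideal.ofList rs := by simp
  have rs_mem : ∀ r ∈ rs, r ∈ maximalIdeal R := fun r hr =>
    le_of_isAssociatedPrime_quotient hm (Ideal.subset_span hr)
  have hCM : IsCohenMacaulay R (R ⧸ Ideal.ofList rs) := by
    rw [← smul_top_eq]
    refine hR.quotient_ofList rs_mem ?_
    rw [smul_top_eq, Module.supportDim_quotient_eq_ringKrullDim,
      Module.supportDim_self_eq_ringKrullDim]
    refine le_trans ?_ (ringKrullDim_quotient_add_height_le (Ideal.ofList rs))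
    gcongr
    exact_mod_cast hrs
  calc ringKrullDim R
    _ ≤ Module.supportDim R (R ⧸ Ideal.ofList rs) + rs.length := by
      rw [← Module.supportDim_self_eq_ringKrullDim, ← smul_top_eq]
      exact supportDim_le_supportDim_quotient_ofList_add_length rs_mem
    _ ≤ ringKrullDim (R ⧸ maximalIdeal R) + rs.length := by
      gcongr
      exact hCM.supportDim_le_ringKrullDim_quotient hm
    _ = rs.length := by
      rw [ringKrullDim_eq_zero_of_isField
        ((Ideal.Quotient.maximal_ideal_iff_isField_quotient _).1 inferInstance), zero_add]

end

/-- The Cohen–Macaulay property of a Noetherian ring, imposed on the localization at every prime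
ideal. -/
def IsCohenMacaulayRing (S : Type u) [CommRing S] : Prop :=
  ∀ (p : Ideal S) [p.IsPrime],
    IsCohenMacaulay (Localization.AtPrime p) (Localization.AtPrime p)

section Unmixedness

variable {S : Type u} [CommRing S]

lemma isCohenMacaulayRing_of_isRegularRing [IsRegularRing S] : IsCohenMacaulayRing S :=
  fun p _ => isCohenMacaulay_of_isRegularLocalRing (Localization.AtPrime p)

open Module.associatedPrimes in
lemma isAssociatedPrime_maximalIdeal_localization_quotient {I p : Ideal S} [p.IsPrime]
    (hp : IsAssociatedPrime p (S ⧸ I)) :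
    IsAssociatedPrime (maximalIdeal (Localization.AtPrime p))
      (Localization.AtPrime p ⧸ I.map (algebraMap S (Localization.AtPrime p))) := by
  rw [← Ideal.localized'_eq_map (S := Localization.AtPrime p) (p := p.primeCompl)]
  refine mem_associatedPrimes_of_comap_mem_associatedPrimes_of_isLocalizedModule p.primeCompl
    (I.toLocalizedQuotient' (Localization.AtPrime p) p.primeCompl
      (Algebra.linearMap S (Localization.AtPrime p))) _ ?_
  rwa [← Ideal.under_def, Localization.AtPrime.under_maximalIdeal]

variable [IsNoetherianRing S]

lemma IsCohenMacaulayRing.height_le_length_of_isAssociatedPrime (hS : IsCohenMacaulayRing S)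
    {rs : List S} (hrs : rs.length ≤ (Ideal.ofList rs).height) {p : Ideal S}
    (hp : IsAssociatedPrime p (S ⧸ Ideal.ofList rs)) : p.height ≤ rs.length := by
  have := hp.isPrime
  let R := Localization.AtPrime p
  have map_eq : (Ideal.ofList rs).map (algebraMap S R) = Ideal.ofList (rs.map (algebraMap S R)) :=
    Ideal.map_ofList _ _
  have hle : ringKrullDim R ≤ (rs.map (algebraMap S R)).length := by
    refine (hS p).ringKrullDim_le_length ?_ ?_
    · rw [← map_eq, List.length_map]
      exact hrs.trans (height_le_height_map_algebraMap p.primeCompl R _)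
    · rw [← map_eq]
      exact isAssociatedPrime_maximalIdeal_localization_quotient hp
  rw [IsLocalization.AtPrime.ringKrullDim_eq_height p R, List.length_map] at hle
  exact_mod_cast hle

lemma IsCohenMacaulayRing.mk_mem_nonZeroDivisors (hS : IsCohenMacaulayRing S) {rs : List S}
    (hrs : rs.length ≤ (Ideal.ofList rs).height) {x : S}
    (hx : rs.length + 1 ≤ (Ideal.ofList rs ⊔ Ideal.span {x}).height) :
    Ideal.Quotient.mk (Ideal.ofList rs) x ∈ nonZeroDivisors (S ⧸ Ideal.ofList rs) := by
  have hreg : IsSMulRegular (S ⧸ Ideal.ofList rs) x := by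
    by_contra hzd
    obtain ⟨p, hp, hxp⟩ : ∃ p ∈ associatedPrimes S (S ⧸ Ideal.ofList rs), x ∈ p := by
      simpa using (biUnion_associatedPrimes_eq_compl_regular S _).ge hzd
    have le_p : Ideal.ofList rs ⊔ Ideal.span {x} ≤ p :=
      sup_le (le_of_isAssociatedPrime_quotient hp) (by simpa [Ideal.span_le] using hxp)
    have hlt := (hx.trans (Ideal.height_mono le_p)).trans
      (hS.height_le_length_of_isAssociatedPrime hrs hp)
    exact absurd hlt (by norm_cast; lia)
  exact mem_nonZeroDivisors_iff_right.2 fun z hz =>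
    hreg.right_eq_zero_of_smul (by rwa [Algebra.smul_def, mul_comm])

end Unmixedness

lemma isPrime_of_isDomain_localizationAway {S : Type*} [CommRing S] {I : Ideal S} {x : S}
    (hx : Ideal.Quotient.mk I x ∈ nonZeroDivisors (S ⧸ I))
    [IsDomain (Localization.Away (Ideal.Quotient.mk I x))] : I.IsPrime := by
  have hinj : Function.Injective
      (algebraMap (S ⧸ I) (Localization.Away (Ideal.Quotient.mk I x))) :=
    IsLocalization.injective _ (M := Submonoid.powers (Ideal.Quotient.mk I x))
      (Submonoid.powers_le.2 hx)
  exact (Ideal.Quotient.isDomain_iff_prime I).1 hinj.isDomain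

lemma mem_of_pow_mul_mem {S : Type*} [CommRing S] {I : Ideal S} {x p : S} {N : ℕ}
    (hx : Ideal.Quotient.mk I x ∈ nonZeroDivisors (S ⧸ I)) (hp : x ^ N * p ∈ I) : p ∈ I := by
  rw [← Ideal.Quotient.eq_zero_iff_mem, map_mul, map_pow] at hp
  exact Ideal.Quotient.eq_zero_iff_mem.1
    ((mul_left_mem_nonZeroDivisors_eq_zero_iff (pow_mem hx N)).1 hp)

theorem stmt5_general {S : Type u} [CommRing S] [IsNoetherianRing S] (hS : IsCohenMacaulayRing S)
    (c : ℕ) (I : Ideal S) (hgen : ∃ g : Fin c → S, I = Ideal.span (Set.range g))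
    (hcodim : (c : ℕ∞) ≤ codimV I) (x₁ x₂ : S)
    (hx₁ : (c : ℕ∞) + 1 ≤ codimV (I ⊔ Ideal.span {x₁}))
    (hx₂ : (c : ℕ∞) + 1 ≤ codimV (I ⊔ Ideal.span {x₂}))
    (hdom : IsDomain (Localization.Away (Ideal.Quotient.mk I (x₁ * x₂)))) :
    Ideal.Quotient.mk I (x₁ * x₂) ∈ nonZeroDivisors (S ⧸ I) ∧
      I.IsPrime ∧
      (∀ p : S, (∃ N : ℕ, (x₁ * x₂) ^ N * p ∈ I) → p ∈ I) := by
  obtain ⟨rs, rfl, rfl⟩ : ∃ rs : List S, rs.length = c ∧ I = Ideal.ofList rs := by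
    obtain ⟨g, rfl⟩ := hgen
    exact ⟨List.ofFn g, List.length_ofFn, congrArg Ideal.span (by ext; simp [List.mem_ofFn])⟩
  rw [codimV_eq_height] at hcodim hx₁ hx₂
  have hnzd : Ideal.Quotient.mk _ (x₁ * x₂) ∈ nonZeroDivisors (S ⧸ Ideal.ofList rs) := by
    rw [map_mul]
    exact mul_mem (hS.mk_mem_nonZeroDivisors hcodim hx₁) (hS.mk_mem_nonZeroDivisors hcodim hx₂)
  exact ⟨hnzd, isPrime_of_isDomain_localizationAway hnzd,
    fun _ ⟨_, hN⟩ => mem_of_pow_mul_mem hnzd hN⟩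

/-- Let `S` be a polynomial ring over a field and `I ⊆ S` an ideal generated
by `c` elements with `codim V(I) = c` (a complete intersection).  Suppose
`codim V(I, x₁) ≥ c+1`, `codim V(I, x₂) ≥ c+1`, and `(S/I)_{x₁x₂}` is a domain.  Then
`x₁x₂` is a non-zero divisor on `S/I`, `S/I` is a domain (i.e. `I` is prime), and
`I : ⟨x₁x₂⟩^∞ = I`. -/
theorem stmt5 (K : Type) [Field K] (n : ℕ) (c : ℕ)
    (I : Ideal (MvPolynomial (Fin n) K))
    (hgen : ∃ g : Fin c → MvPolynomial (Fin n) K, I = Ideal.span (Set.range g))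
    (hcodim : codimV I = (c : ℕ∞))
    (x₁ x₂ : MvPolynomial (Fin n) K)
    (hx₁ : ((c : ℕ∞) + 1) ≤ codimV (I ⊔ Ideal.span {x₁}))
    (hx₂ : ((c : ℕ∞) + 1) ≤ codimV (I ⊔ Ideal.span {x₂}))
    (hdom : IsDomain (Localization.Away (Ideal.Quotient.mk I (x₁ * x₂)))) :
    (Ideal.Quotient.mk I (x₁ * x₂)) ∈
        nonZeroDivisors (MvPolynomial (Fin n) K ⧸ I) ∧
      I.IsPrime ∧
      (∀ p : MvPolynomial (Fin n) K, (∃ N : ℕ, (x₁ * x₂) ^ N * p ∈ I) → p ∈ I) :=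
  stmt5_general isCohenMacaulayRing_of_isRegularRing c I hgen hcodim.ge x₁ x₂ hx₁ hx₂ hdom
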